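/- Let r > 0, let n ≥ 1 be an integer, and let u, w ∈ X_r satisfy √n·w − (1/p⁰)Q(w,w) = u in L¹(ℝ³). Then ‖√n·w − u‖ ≤ 2C‖u‖²/n ≤ 2Cr²/n. -/

import Mathlib

/-!
The heart of the matter is that `Q(w,w) / p⁰` has integral zero and `L¹`-norm at most `2C‖w‖²`
(`Qcoll_bound`). Integrating the equation and using `u, w ≥ 0` then gives `√n ‖w‖ = ‖u‖`, and the
norm of `√n w - u = Q(w,w) / p⁰` is at most `2C‖w‖² = 2C‖u‖² / n`.

Both facts about `Q` follow from Fubini's theorem once it is known that, for fixed `ω`, the collision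
map `(p̄, q̄) ↦ (p̄′, q̄′)` is an involution (`collMap_collMap`) preserving the measure
`dp̄ dq̄ / (p⁰ q⁰)` (`measurePreserving_collMap`): by the symmetry of `S₀` the gain integrand is the
loss integrand composed with the collision map, and the loss integrand is at most `C₁ |w(p̄)| |w(q̄)|`.

Instead of computing a six-dimensional Jacobian, write `p̄ = v + m sinh(A) ω̂` with `v` orthogonal to
`ω̂` and `m = √(1 + |v|²)`, and likewise `q̄ = w + M sinh(B) ω̂`. Then `p⁰ = m cosh A`, the measure
`dp̄ / p⁰` becomes a constant times `dv dA` (`exists_momMeas_eq`), and the collision fixes `v`, `w` and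
reflects both rapidities at the centre-of-mass rapidity `η`: `A ↦ 2η - A`, `B ↦ 2η - B`
(`collMap_rapCoord`). Since `η` commutes with boosts, `2η = 2B + k(A - B)`, so in the coordinates
`(A - B, B)` this is `(D, B) ↦ (-D, B + k(D))`, a shear and a reflection, which preserves Lebesgue
measure (`lintegral_rap`).
-/

open MeasureTheory Real

noncomputable section

/-- Momentum space `ℝ³`. -/
abbrev E3 : Type := EuclideanSpace ℝ (Fin 3)

/-- The scalar product associated with the Bianchi type I metric coefficients `α = a(t)`,
`β = b(t)`: `p̄·q̄ = α²p¹q¹ + β²(p²q² + p³q³)`. -/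
def mdot (α β : ℝ) (p q : E3) : ℝ :=
  α ^ 2 * p 0 * q 0 + β ^ 2 * (p 1 * q 1 + p 2 * q 2)

/-- `p⁰ = √(1 + |p̄|²)` where `|p̄|² = p̄·p̄`. -/
def pZ (α β : ℝ) (p : E3) : ℝ := Real.sqrt (1 + mdot α β p p)

/-- `ω` normalized to unit length for the metric norm. -/
def omHat (α β : ℝ) (ω : E3) : E3 := (Real.sqrt (mdot α β ω ω))⁻¹ • ω

/-- The total energy `e = p⁰ + q⁰`. -/
def collE (α β : ℝ) (p q : E3) : ℝ := pZ α β p + pZ α β q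

/-- The function `C(p̄, q̄, ω)` of Glassey's representation of post-collisional momenta. -/
def collC (α β : ℝ) (p q ω : E3) : ℝ :=
  2 * pZ α β p * pZ α β q * collE α β p q *
      mdot α β (omHat α β ω) ((pZ α β q)⁻¹ • q - (pZ α β p)⁻¹ • p) /
    (collE α β p q ^ 2 - mdot α β (omHat α β ω) (p + q) ^ 2)

/-- The post-collisional momentum `p̄′ = p̄ + C(p̄,q̄,ω)ω̂`. -/
def pPr (α β : ℝ) (p q ω : E3) : E3 := p + collC α β p q ω • omHat α β ω

/-- The post-collisional momentum `q̄′ = q̄ − C(p̄,q̄,ω)ω̂`. -/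
def qPr (α β : ℝ) (p q ω : E3) : E3 := q - collC α β p q ω • omHat α β ω

/-- The surface measure on the unit sphere `S² ⊂ ℝ³`. -/
def sphMeas : Measure (Metric.sphere (0 : E3) 1) := (volume : Measure E3).toSphere

/-- The gain term `Q⁺(f,g)`. -/
def Qplus (α β : ℝ) (S₀ : E3 → E3 → E3 → E3 → ℝ) (f g : E3 → ℝ) (p : E3) : ℝ :=
  α * β ^ 2 *
    ∫ q : E3, (pZ α β q)⁻¹ *
      ∫ ω : Metric.sphere (0 : E3) 1,
        f (pPr α β p q ω) * g (qPr α β p q ω) *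
          S₀ p q (pPr α β p q ω) (qPr α β p q ω) ∂sphMeas

/-- The loss term `Q⁻(f,g)`. -/
def Qminus (α β : ℝ) (S₀ : E3 → E3 → E3 → E3 → ℝ) (f g : E3 → ℝ) (p : E3) : ℝ :=
  α * β ^ 2 *
    ∫ q : E3, (pZ α β q)⁻¹ *
      ∫ ω : Metric.sphere (0 : E3) 1,
        f p * g q * S₀ p q (pPr α β p q ω) (qPr α β p q ω) ∂sphMeas

/-- The collision operator `Q = Q⁺ − Q⁻`. -/
def Qcoll (α β : ℝ) (S₀ : E3 → E3 → E3 → E3 → ℝ) (f g : E3 → ℝ) (p : E3) : ℝ :=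
  Qplus α β S₀ f g p - Qminus α β S₀ f g p

/-- The space `L¹(ℝ³)`. -/
abbrev L1 : Type := Lp ℝ 1 (volume : Measure E3)

/-- Membership in `X_r = {f ∈ L¹(ℝ³) : f ≥ 0 a.e., ‖f‖ ≤ r}`. -/
def memX (r : ℝ) (f : L1) : Prop := (0 ≤ᵐ[volume] ⇑f) ∧ ‖f‖ ≤ r

end

noncomputable section

/-! ### Collisions on a line in rapidity coordinates -/

/-- Twice the rapidity of the centre-of-mass frame of two particles on a line, with masses `m`, `M`
and rapidities `A`, `B`. -/
def rap (m M A B : ℝ) : ℝ :=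
  Real.log ((m * Real.exp A + M * Real.exp B) / (m * Real.exp (-A) + M * Real.exp (-B)))

lemma measurable_rap : Measurable fun x : (ℝ × ℝ) × ℝ × ℝ => rap x.1.1 x.1.2 x.2.1 x.2.2 := by
  unfold rap; fun_prop

lemma exp_rap {m M : ℝ} (hm : 0 < m) (hM : 0 < M) (A B : ℝ) :
    Real.exp (rap m M A B) =
      (m * Real.exp A + M * Real.exp B) / (m * Real.exp (-A) + M * Real.exp (-B)) :=
  Real.exp_log (by positivity)

/-- Simultaneous translation of the rapidities (a Lorentz boost) translates that of the centre of
mass. -/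
lemma rap_shift {m M : ℝ} (hm : 0 < m) (hM : 0 < M) (A B s : ℝ) :
    rap m M (A + s) (B + s) = rap m M A B + 2 * s := by
  apply Real.exp_injective
  rw [Real.exp_add, exp_rap hm hM, exp_rap hm hM, two_mul, neg_add, neg_add]
  simp only [Real.exp_add, Real.exp_neg]
  have := Real.exp_pos A
  have := Real.exp_pos B
  have := Real.exp_pos s
  field_simp

/-- A collision does not change the centre of mass frame. -/
lemma rap_collide {m M : ℝ} (hm : 0 < m) (hM : 0 < M) (A B : ℝ) :
    rap m M (rap m M A B - A) (rap m M A B - B) = rap m M A B := by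
  apply Real.exp_injective
  rw [exp_rap hm hM]
  have h := exp_rap hm hM A B
  simp only [neg_sub, Real.exp_sub, h, Real.exp_neg]
  have := Real.exp_pos A
  have := Real.exp_pos B
  field_simp

/-- In rapidity coordinates the collision of two particles on a line is a composition of shears and
reflections, so it preserves Lebesgue measure. -/
lemma lintegral_rap {m M : ℝ} (hm : 0 < m) (hM : 0 < M) (G : ℝ → ℝ → ENNReal)
    (hG : Measurable fun x : ℝ × ℝ => G x.1 x.2) :
    ∫⁻ A, ∫⁻ B, G (rap m M A B - A) (rap m M A B - B) = ∫⁻ A, ∫⁻ B, G A B := by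
  have hk : Measurable fun x : ℝ × ℝ => rap m M x.1 x.2 :=
    measurable_rap.comp (f := fun x : ℝ × ℝ => ((m, M), x)) (by fun_prop)
  have hk0 : Measurable fun x : ℝ => rap m M x 0 :=
    hk.comp (f := fun x : ℝ => (x, 0)) (by fun_prop)
  have hG' : ∀ {γ : Type} [MeasurableSpace γ] {f g : γ → ℝ}, Measurable f → Measurable g →
      Measurable fun x => G (f x) (g x) := fun hf hg => hG.comp (hf.prodMk hg)
  have key : ∀ B D : ℝ, rap m M (D + B) B = rap m M D 0 + 2 * B := fun B D => by
    simpa using rap_shift hm hM D 0 B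
  calc ∫⁻ A, ∫⁻ B, G (rap m M A B - A) (rap m M A B - B)
      = ∫⁻ B, ∫⁻ A, G (rap m M A B - A) (rap m M A B - B) :=
        lintegral_lintegral_swap
          (hG' (hk.sub measurable_fst) (hk.sub measurable_snd)).aemeasurable
    _ = ∫⁻ B, ∫⁻ D, G (B + rap m M D 0 - D) (B + rap m M D 0) := by
        refine lintegral_congr fun B => ?_
        rw [← lintegral_add_right_eq_self _ B]
        refine lintegral_congr fun D => ?_
        rw [key]; congr 1 <;> ring
    _ = ∫⁻ D, ∫⁻ B, G (B + rap m M D 0 - D) (B + rap m M D 0) := by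
        refine lintegral_lintegral_swap (Measurable.aemeasurable ?_)
        exact hG' (by fun_prop) (by fun_prop)
    _ = ∫⁻ D, ∫⁻ B, G (B - D) B := by
        refine lintegral_congr fun D => ?_
        exact lintegral_add_right_eq_self (fun B => G (B - D) B) (rap m M D 0)
    _ = ∫⁻ B, ∫⁻ D, G (B - D) B := by
        refine lintegral_lintegral_swap (Measurable.aemeasurable ?_)
        exact hG' (by fun_prop) (by fun_prop)
    _ = ∫⁻ B, ∫⁻ A, G A B := by
        refine lintegral_congr fun B => ?_
        exact lintegral_sub_left_eq_self (fun A => G A B) B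
    _ = ∫⁻ A, ∫⁻ B, G A B := lintegral_lintegral_swap
          (hG' measurable_snd measurable_fst).aemeasurable

/-- The collision in rapidity coordinates, acting on two particles `(v, A)`, `(w, B)` with
transversal momenta `v`, `w` and effective masses `m v`, `m w`. -/
def rapMap {W : Type*} (m : W → ℝ) (z : (W × ℝ) × W × ℝ) : (W × ℝ) × W × ℝ :=
  ((z.1.1, rap (m z.1.1) (m z.2.1) z.1.2 z.2.2 - z.1.2),
    (z.2.1, rap (m z.1.1) (m z.2.1) z.1.2 z.2.2 - z.2.2))

lemma rapMap_rapMap {W : Type*} {m : W → ℝ} (hm : ∀ v, 0 < m v) (z : (W × ℝ) × W × ℝ) :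
    rapMap m (rapMap m z) = z := by
  obtain ⟨⟨v, A⟩, w, B⟩ := z
  simp [rapMap, rap_collide (hm v) (hm w)]

lemma measurePreserving_rapMap {W : Type*} [MeasurableSpace W] (μ : Measure W) [SFinite μ]
    {m : W → ℝ} (hm : ∀ v, 0 < m v) (hmm : Measurable m) :
    MeasurePreserving (rapMap m) ((μ.prod volume).prod (μ.prod volume))
      ((μ.prod volume).prod (μ.prod volume)) := by
  have hr : Measurable fun z : (W × ℝ) × W × ℝ => rap (m z.1.1) (m z.2.1) z.1.2 z.2.2 :=
    measurable_rap.comp (f := fun z : (W × ℝ) × W × ℝ => ((m z.1.1, m z.2.1), (z.1.2, z.2.2)))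
      (by fun_prop)
  have hR : Measurable (rapMap m) := by unfold rapMap; fun_prop
  have expand : ∀ F : (W × ℝ) × W × ℝ → ENNReal, Measurable F →
      ∫⁻ z, F z ∂((μ.prod volume).prod (μ.prod volume)) =
        ∫⁻ v, ∫⁻ w, ∫⁻ A, ∫⁻ B, F ((v, A), (w, B)) ∂volume ∂volume ∂μ ∂μ := by
    intro F hF
    rw [lintegral_prod _ hF.aemeasurable, lintegral_prod _ (by fun_prop)]
    refine lintegral_congr fun v => ?_
    rw [lintegral_lintegral_swap (f := fun (w : W) (A : ℝ) => ∫⁻ B, F ((v, A), (w, B)))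
      (by unfold Function.uncurry; fun_prop)]
    refine lintegral_congr fun A => ?_
    rw [lintegral_prod _ (by fun_prop)]
  refine ⟨hR, Measure.ext_of_lintegral _ fun F hF => ?_⟩
  rw [lintegral_map hF hR, expand (fun z => F (rapMap m z)) (hF.comp hR), expand F hF]
  refine lintegral_congr fun v => lintegral_congr fun w => ?_
  exact lintegral_rap (hm v) (hm w) (fun A B => F ((v, A), (w, B))) (by fun_prop)

/-- The substitution `t = m sinh A`, for which `dt / √(m² + t²) = dA`. -/
lemma lintegral_sinh {m : ℝ} (hm : 0 < m) (g : ℝ → ENNReal) :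
    ∫⁻ t, ENNReal.ofReal (Real.sqrt (m ^ 2 + t ^ 2))⁻¹ * g t = ∫⁻ A, g (m * Real.sinh A) := by
  have himg : (fun A => m * Real.sinh A) '' Set.univ = Set.univ := by
    rw [Set.image_univ, Set.range_eq_univ]
    intro t
    exact ⟨Real.arsinh (t / m), by simp only [Real.sinh_arsinh]; field_simp⟩
  have h := lintegral_image_eq_lintegral_abs_deriv_mul (s := Set.univ)
    (f := fun A => m * Real.sinh A) (f' := fun A => m * Real.cosh A) MeasurableSet.univ
    (fun A _ => ((Real.hasDerivAt_sinh A).const_mul m).hasDerivWithinAt)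
    (fun A _ B _ hAB => Real.sinh_injective (mul_left_cancel₀ hm.ne' hAB))
    (fun t => ENNReal.ofReal (Real.sqrt (m ^ 2 + t ^ 2))⁻¹ * g t)
  rw [himg, setLIntegral_univ, setLIntegral_univ] at h
  rw [h]
  refine lintegral_congr fun A => ?_
  have hc : 0 < m * Real.cosh A := mul_pos hm (Real.cosh_pos A)
  have : Real.sqrt (m ^ 2 + (m * Real.sinh A) ^ 2) = m * Real.cosh A := by
    rw [← Real.sqrt_sq hc.le]; congr 1; rw [mul_pow m (Real.cosh A), Real.cosh_sq]; ring
  rw [this, ← mul_assoc, ← ENNReal.ofReal_mul (abs_nonneg _), abs_of_pos hc,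
    mul_inv_cancel₀ hc.ne', ENNReal.ofReal_one, one_mul]

/-! ### The metric scalar product and the splitting along a unit vector -/

lemma mdot_comm (α β : ℝ) (p q : E3) : mdot α β p q = mdot α β q p := by
  simp only [mdot]; ring

lemma mdot_add_right (α β : ℝ) (o p q : E3) :
    mdot α β o (p + q) = mdot α β o p + mdot α β o q := by
  simp only [mdot, PiLp.add_apply]; ring

lemma mdot_smul_right (α β : ℝ) (o p : E3) (t : ℝ) :
    mdot α β o (t • p) = t * mdot α β o p := by
  simp only [mdot, PiLp.smul_apply, smul_eq_mul]; ring

lemma mdot_self_nonneg (α β : ℝ) (p : E3) : 0 ≤ mdot α β p p := by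
  simp only [mdot]; nlinarith [sq_nonneg (α * p 0), sq_nonneg (β * p 1), sq_nonneg (β * p 2)]

lemma pZ_ge_one (α β : ℝ) (p : E3) : 1 ≤ pZ α β p :=
  Real.one_le_sqrt.2 (by linarith [mdot_self_nonneg α β p])

lemma pZ_pos (α β : ℝ) (p : E3) : 0 < pZ α β p := zero_lt_one.trans_le (pZ_ge_one α β p)

lemma measurable_mdot (α β : ℝ) : Measurable fun x : E3 × E3 => mdot α β x.1 x.2 := by
  unfold mdot; fun_prop

lemma measurable_pZ (α β : ℝ) : Measurable (pZ α β) := by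
  unfold pZ mdot; fun_prop

/-- `q ↦ o · q` for the metric scalar product, as a linear functional. -/
def mdotL (α β : ℝ) (o : E3) : E3 →ₗ[ℝ] ℝ where
  toFun := mdot α β o
  map_add' := mdot_add_right α β o
  map_smul' t p := mdot_smul_right α β o p t

/-- The metric orthogonal complement of `o`. -/
abbrev perp (α β : ℝ) (o : E3) : Submodule ℝ E3 := LinearMap.ker (mdotL α β o)

lemma mdot_perp {α β : ℝ} {o : E3} (v : perp α β o) : mdot α β o v = 0 := v.2

/-- The splitting of momentum space into the direction of a metric unit vector `o` and its
orthogonal complement. -/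
def splitL (α β : ℝ) (o : E3) (ho : mdot α β o o = 1) : (perp α β o × ℝ) ≃ₗ[ℝ] E3 where
  toFun x := x.1 + x.2 • o
  map_add' x y := by simp only [Prod.fst_add, Prod.snd_add, Submodule.coe_add, add_smul]; abel
  map_smul' t x := by simp [mul_smul]
  invFun p := (⟨p + (-mdot α β o p) • o, by
    rw [LinearMap.mem_ker]
    change mdot α β o _ = 0
    rw [mdot_add_right, mdot_smul_right, ho]; ring⟩, mdot α β o p)
  left_inv x := by
    have h : mdot α β o (x.1 + x.2 • o) = x.2 := by
      rw [mdot_add_right, mdot_smul_right, ho, mdot_perp]; ring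
    ext1
    · ext1; simp [h]
    · exact h
  right_inv p := by simp

/-! ### The measure `dp̄ / p⁰` in rapidity coordinates -/

/-- The measure `dp̄ / p⁰` on momentum space. -/
def momMeas (α β : ℝ) : Measure E3 :=
  (volume : Measure E3).withDensity fun p => ENNReal.ofReal (pZ α β p)⁻¹

instance (α β : ℝ) : SFinite (momMeas α β) := by unfold momMeas; infer_instance

/-- The effective mass `√(1 + |v|²)` of a particle with transversal momentum `v`. -/
def effMass (α β : ℝ) (o : E3) (v : perp α β o) : ℝ := pZ α β v

/-- Rapidity coordinates on momentum space: transversal momentum and rapidity along `o`. -/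
def rapCoord (α β : ℝ) (o : E3) (x : perp α β o × ℝ) : E3 :=
  x.1 + (effMass α β o x.1 * Real.sinh x.2) • o

lemma measurable_effMass (α β : ℝ) (o : E3) : Measurable (effMass α β o) :=
  (measurable_pZ α β).comp measurable_subtype_coe

lemma measurable_rapCoord (α β : ℝ) (o : E3) : Measurable (rapCoord α β o) := by
  have := measurable_effMass α β o
  unfold rapCoord
  exact (measurable_subtype_coe.comp measurable_fst).add (by fun_prop)

lemma pZ_split {α β : ℝ} {o : E3} (ho : mdot α β o o = 1) (v : perp α β o) (t : ℝ) :
    pZ α β (v + t • o) = Real.sqrt (effMass α β o v ^ 2 + t ^ 2) := by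
  have h0 := mdot_perp v
  have h1 : mdot α β (v + t • o) (v + t • o) = mdot α β v v + t ^ 2 := by
    rw [mdot_add_right, mdot_smul_right, mdot_comm α β _ o, mdot_comm α β _ v, mdot_add_right,
      mdot_add_right, mdot_smul_right, mdot_smul_right, mdot_comm α β v o, h0, ho]
    ring
  rw [effMass, pZ, pZ, Real.sq_sqrt (by linarith [mdot_self_nonneg α β v]), h1, add_assoc]

lemma rapCoord_surjective {α β : ℝ} {o : E3} (ho : mdot α β o o = 1) :
    Function.Surjective (rapCoord α β o) := by
  intro p
  obtain ⟨⟨v, t⟩, rfl⟩ := (splitL α β o ho).surjective p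
  have hm : effMass α β o v ≠ 0 := (pZ_pos α β v).ne'
  refine ⟨(v, Real.arsinh (t / effMass α β o v)), ?_⟩
  simp only [rapCoord, Real.sinh_arsinh]
  rw [mul_div_cancel₀ _ hm]
  rfl

/-- In rapidity coordinates the measure `dp̄ / p⁰` is a multiple of Lebesgue measure. -/
lemma exists_momMeas_eq {α β : ℝ} {o : E3} (ho : mdot α β o o = 1) :
    ∃ c : NNReal, momMeas α β =
      c • ((volume : Measure (perp α β o)).prod volume).map (rapCoord α β o) := by
  let L := (splitL α β o ho).toContinuousLinearEquiv
  let μ := ((volume : Measure (perp α β o)).prod (volume : Measure ℝ)).map L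
  have : μ.IsAddHaarMeasure := L.isAddHaarMeasure_map _
  refine ⟨(volume : Measure E3).addHaarScalarFactor μ, ?_⟩
  set c := (volume : Measure E3).addHaarScalarFactor μ with hc
  have hvol : (volume : Measure E3) = c • μ := Measure.isAddLeftInvariant_eq_smul _ _
  have hL : Measurable L := L.continuous.measurable
  have hpZ := measurable_pZ α β
  have hd : Measurable fun p => ENNReal.ofReal (pZ α β p)⁻¹ := by fun_prop
  refine Measure.ext_of_lintegral _ fun F hF => ?_
  rw [momMeas, lintegral_withDensity_eq_lintegral_mul _ hd hF, hvol, lintegral_smul_measure,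
    lintegral_smul_measure, lintegral_map (hd.mul hF) hL,
    lintegral_map hF (measurable_rapCoord α β o),
    lintegral_prod (fun x => (_ : E3 → ENNReal) (L x)) ((hd.mul hF).comp hL).aemeasurable,
    lintegral_prod (fun x => F (rapCoord α β o x))
      (hF.comp (measurable_rapCoord α β o)).aemeasurable]
  congr 1
  refine lintegral_congr fun v => ?_
  refine Eq.trans (lintegral_congr fun t => ?_)
    (lintegral_sinh (m := effMass α β o v) (pZ_pos α β v) fun t => F (v + t • o))
  change ENNReal.ofReal (pZ α β (v + t • o))⁻¹ * F (v + t • o) = _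
  rw [pZ_split ho]

lemma pZ_rapCoord {α β : ℝ} {o : E3} (ho : mdot α β o o = 1) (v : perp α β o) (A : ℝ) :
    pZ α β (rapCoord α β o (v, A)) = effMass α β o v * Real.cosh A := by
  have hc : 0 < effMass α β o v * Real.cosh A := mul_pos (pZ_pos α β v) (Real.cosh_pos A)
  rw [rapCoord, pZ_split ho, ← Real.sqrt_sq hc.le]
  congr 1
  rw [mul_pow _ (Real.cosh A), Real.cosh_sq]; ring

lemma mdot_rapCoord {α β : ℝ} {o : E3} (ho : mdot α β o o = 1) (v : perp α β o) (A : ℝ) :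
    mdot α β o (rapCoord α β o (v, A)) = effMass α β o v * Real.sinh A := by
  rw [rapCoord, mdot_add_right, mdot_smul_right, ho, mdot_perp]; ring

/-! ### The collision map preserves `dp̄ dq̄ / (p⁰ q⁰)` -/

/-- The collision map `(p̄, q̄) ↦ (p̄′, q̄′)`. -/
def collMap (α β : ℝ) (ω : E3) (z : E3 × E3) : E3 × E3 :=
  (pPr α β z.1 z.2 ω, qPr α β z.1 z.2 ω)

/-- Reflecting the rapidity of one particle at that of the centre of mass, written in terms of
energies and momenta: the change of momentum is the coefficient of Glassey's representation. -/
lemma sinh_rap {m M : ℝ} (hm : 0 < m) (hM : 0 < M) (A B : ℝ) :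
    m * Real.sinh (rap m M A B - A) - m * Real.sinh A =
      2 * (m * Real.cosh A) * (M * Real.cosh B) * (m * Real.cosh A + M * Real.cosh B) *
        ((M * Real.cosh B)⁻¹ * (M * Real.sinh B) - (m * Real.cosh A)⁻¹ * (m * Real.sinh A)) /
      ((m * Real.cosh A + M * Real.cosh B) ^ 2 - (m * Real.sinh A + M * Real.sinh B) ^ 2) := by
  have hA := Real.cosh_pos A
  have hB := Real.cosh_pos B
  have e1 : 2 * (m * Real.cosh A) * (M * Real.cosh B) * (m * Real.cosh A + M * Real.cosh B) *
        ((M * Real.cosh B)⁻¹ * (M * Real.sinh B) - (m * Real.cosh A)⁻¹ * (m * Real.sinh A)) =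
      2 * (m * Real.cosh A + M * Real.cosh B) *
        ((m * Real.cosh A) * (M * Real.sinh B) - (M * Real.cosh B) * (m * Real.sinh A)) := by
    field_simp
  have e2 : (m * Real.cosh A + M * Real.cosh B) ^ 2 - (m * Real.sinh A + M * Real.sinh B) ^ 2 =
      (m * Real.exp A + M * Real.exp B) * (m * Real.exp (-A) + M * Real.exp (-B)) := by
    simp only [Real.cosh_eq, Real.sinh_eq]; ring
  rw [e1, e2, Real.sinh_eq (rap m M A B - A), neg_sub, Real.exp_sub, Real.exp_sub, exp_rap hm hM]
  simp only [Real.cosh_eq, Real.sinh_eq, Real.exp_neg]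
  have := Real.exp_pos A
  have := Real.exp_pos B
  field_simp
  ring

lemma rap_comm (m M A B : ℝ) : rap m M A B = rap M m B A := by
  simp only [rap, add_comm]

/-- In rapidity coordinates along `ω̂`, the collision map reflects both rapidities at the rapidity
of the centre of mass. -/
lemma collMap_rapCoord {α β : ℝ} {ω o : E3} (hoo : o = omHat α β ω) (ho : mdot α β o o = 1)
    (z : (perp α β o × ℝ) × perp α β o × ℝ) :
    collMap α β ω (Prod.map (rapCoord α β o) (rapCoord α β o) z) =
      Prod.map (rapCoord α β o) (rapCoord α β o) (rapMap (effMass α β o) z) := by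
  obtain ⟨⟨v, A⟩, w, B⟩ := z
  have hm : 0 < effMass α β o v := pZ_pos α β v
  have hM : 0 < effMass α β o w := pZ_pos α β w
  have hc : collC α β (rapCoord α β o (v, A)) (rapCoord α β o (w, B)) ω =
      effMass α β o v * Real.sinh (rap (effMass α β o v) (effMass α β o w) A B - A) -
        effMass α β o v * Real.sinh A := by
    rw [sinh_rap hm hM, collC, collE, ← hoo, sub_eq_add_neg (_ • _), ← neg_smul, mdot_add_right,
      mdot_add_right, mdot_smul_right, mdot_smul_right, mdot_rapCoord ho, mdot_rapCoord ho,
      pZ_rapCoord ho, pZ_rapCoord ho, neg_mul, ← sub_eq_add_neg]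
  -- momentum conservation along `ω̂`
  have hc' : collC α β (rapCoord α β o (v, A)) (rapCoord α β o (w, B)) ω =
      -(effMass α β o w * Real.sinh (rap (effMass α β o v) (effMass α β o w) A B - B) -
        effMass α β o w * Real.sinh B) := by
    rw [hc, rap_comm (effMass α β o v) (effMass α β o w) A B, sinh_rap hM hm, rap_comm,
      sinh_rap hm hM, ← neg_div]
    congr 1 <;> ring
  simp only [collMap, Prod.map, rapMap, Prod.mk.injEq]
  constructor
  · rw [pPr, hc, ← hoo]; simp only [rapCoord]; module
  · rw [qPr, hc', ← hoo]; simp only [rapCoord]; module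

lemma collMap_collMap {α β : ℝ} {ω : E3} (ho : mdot α β (omHat α β ω) (omHat α β ω) = 1)
    (z : E3 × E3) : collMap α β ω (collMap α β ω z) = z := by
  obtain ⟨x, rfl⟩ := ((rapCoord_surjective ho).prodMap (rapCoord_surjective ho)) z
  rw [collMap_rapCoord rfl ho, collMap_rapCoord rfl ho,
    rapMap_rapMap (m := effMass α β (omHat α β ω)) fun v => pZ_pos α β v]

lemma measurable_collMap (α β : ℝ) :
    Measurable fun x : E3 × E3 × E3 => collMap α β x.1 x.2 := by
  have hd := measurable_mdot α β
  have hZ := measurable_pZ α β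
  have hd' : ∀ {γ : Type} [MeasurableSpace γ] {f g : γ → E3}, Measurable f → Measurable g →
      Measurable fun x => mdot α β (f x) (g x) := fun hf hg => hd.comp (hf.prodMk hg)
  have ho : Measurable (omHat α β) := by
    have := hd' (measurable_id (α := E3)) measurable_id
    unfold omHat
    exact (Measurable.inv (Measurable.sqrt this)).smul measurable_id
  have hC : Measurable fun x : E3 × E3 × E3 => collC α β x.2.1 x.2.2 x.1 := by
    have h1 : Measurable fun x : E3 × E3 × E3 => mdot α β (omHat α β x.1)
        ((pZ α β x.2.2)⁻¹ • x.2.2 - (pZ α β x.2.1)⁻¹ • x.2.1) := hd' (by fun_prop) (by fun_prop)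
    have h2 : Measurable fun x : E3 × E3 × E3 => mdot α β (omHat α β x.1) (x.2.1 + x.2.2) :=
      hd' (by fun_prop) (by fun_prop)
    unfold collC collE
    fun_prop
  unfold collMap pPr qPr
  fun_prop

/-- For fixed `ω` the collision map preserves `dp̄ dq̄ / (p⁰ q⁰)`. -/
lemma measurePreserving_collMap {α β : ℝ} {ω : E3}
    (ho : mdot α β (omHat α β ω) (omHat α β ω) = 1) :
    MeasurePreserving (collMap α β ω) ((momMeas α β).prod (momMeas α β))
      ((momMeas α β).prod (momMeas α β)) := by
  set o := omHat α β ω with hoo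
  have hT : Measurable (collMap α β ω) :=
    (measurable_collMap α β).comp (measurable_const.prodMk measurable_id)
  have hΦ := measurable_rapCoord α β o
  obtain ⟨c, hc⟩ := exists_momMeas_eq ho
  have hR := measurePreserving_rapMap (volume : Measure (perp α β o)) (m := effMass α β o)
    (fun v => pZ_pos α β v) (measurable_effMass α β o)
  refine ⟨hT, ?_⟩
  have hcomp : collMap α β ω ∘ Prod.map (rapCoord α β o) (rapCoord α β o) =
      Prod.map (rapCoord α β o) (rapCoord α β o) ∘ rapMap (effMass α β o) :=
    funext fun z => collMap_rapCoord hoo ho z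
  rw [hc, Measure.prod_smul_left, Measure.prod_smul_right, Measure.map_prod_map _ _ hΦ hΦ,
    Measure.map_smul, Measure.map_smul, Measure.map_map hT (hΦ.prodMap hΦ), hcomp,
    ← Measure.map_map (hΦ.prodMap hΦ) hR.measurable, hR.map_eq]

/-! ### The sphere of directions -/

lemma omHat_unit {α β : ℝ} (hα : 0 < α) (hβ : 0 < β) (ω : Metric.sphere (0 : E3) 1) :
    mdot α β (omHat α β ω) (omHat α β ω) = 1 := by
  have hne : (ω : E3) ≠ 0 := ne_zero_of_mem_unit_sphere ω
  have hpos : 0 < mdot α β (ω : E3) ω := by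
    refine (mdot_self_nonneg α β _).lt_of_ne' fun h => hne ?_
    have h' : (α * (ω : E3) 0) ^ 2 + ((β * (ω : E3) 1) ^ 2 + (β * (ω : E3) 2) ^ 2) = 0 := by
      rw [← h, mdot]; ring
    have h0 : (α * (ω : E3) 0) ^ 2 = 0 := by
      nlinarith [sq_nonneg (α * (ω : E3) 0), sq_nonneg (β * (ω : E3) 1),
        sq_nonneg (β * (ω : E3) 2)]
    have h1 : (β * (ω : E3) 1) ^ 2 = 0 := by
      nlinarith [sq_nonneg (α * (ω : E3) 0), sq_nonneg (β * (ω : E3) 1),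
        sq_nonneg (β * (ω : E3) 2)]
    have h2 : (β * (ω : E3) 2) ^ 2 = 0 := by
      nlinarith [sq_nonneg (α * (ω : E3) 0), sq_nonneg (β * (ω : E3) 1),
        sq_nonneg (β * (ω : E3) 2)]
    simp only [pow_eq_zero_iff two_ne_zero, mul_eq_zero, hα.ne', hβ.ne', false_or] at h0 h1 h2
    ext i
    fin_cases i <;> simpa
  rw [omHat, mdot_smul_right, mdot_comm α β (_ • _), mdot_smul_right, ← mul_assoc, ← mul_inv,
    Real.mul_self_sqrt hpos.le, inv_mul_cancel₀ hpos.ne']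

instance : IsFiniteMeasure sphMeas := by unfold sphMeas; infer_instance

lemma sphMeas_univ : sphMeas.real Set.univ = 4 * Real.pi := by
  rw [Measure.real, sphMeas, Measure.toSphere_apply_univ, EuclideanSpace.volume_ball_fin_three]
  simp only [ENNReal.toReal_mul, finrank_euclideanSpace_fin]
  rw [ENNReal.toReal_ofReal (by positivity)]
  simp
  ring

/-! ### The collision operator on `L¹` -/

/-- Integrals over momentum space with weight `1 / p⁰`. -/
lemma integral_momMeas (α β : ℝ) (f : E3 → ℝ) :
    ∫ p, f p ∂momMeas α β = ∫ p, (pZ α β p)⁻¹ * f p := by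
  have hZ := measurable_pZ α β
  rw [momMeas, integral_withDensity_eq_integral_toReal_smul (by fun_prop) (by simp)]
  refine integral_congr_ae (.of_forall fun p => ?_)
  simp [ENNReal.toReal_ofReal (inv_nonneg.2 (pZ_pos α β p).le)]

lemma integrable_momMeas_iff (α β : ℝ) (f : E3 → ℝ) :
    Integrable f (momMeas α β) ↔ Integrable fun p => (pZ α β p)⁻¹ * f p := by
  have hZ := measurable_pZ α β
  rw [momMeas, integrable_withDensity_iff_integrable_smul' (by fun_prop) (by simp)]
  refine integrable_congr (.of_forall fun p => ?_)
  simp [ENNReal.toReal_ofReal (inv_nonneg.2 (pZ_pos α β p).le)]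

lemma integrable_momMeas (α β : ℝ) {f : E3 → ℝ} (hf : Integrable f) :
    Integrable f (momMeas α β) := by
  have hZ := measurable_pZ α β
  rw [integrable_momMeas_iff]
  refine hf.mono (by have := hf.1; fun_prop) (.of_forall fun p => ?_)
  rw [norm_mul]
  refine mul_le_of_le_one_left (norm_nonneg _) ?_
  rw [Real.norm_of_nonneg (inv_nonneg.2 (pZ_pos α β p).le)]
  exact inv_le_one_of_one_le₀ (pZ_ge_one α β p)

lemma integral_momMeas_le (α β : ℝ) {f : E3 → ℝ} (hf : Integrable f) :
    ∫ p, ‖f p‖ ∂momMeas α β ≤ ∫ p, ‖f p‖ := by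
  rw [integral_momMeas]
  refine integral_mono ((integrable_momMeas_iff α β _).1 (integrable_momMeas α β hf.norm))
    hf.norm fun p => ?_
  exact mul_le_of_le_one_left (norm_nonneg _) (inv_le_one_of_one_le₀ (pZ_ge_one α β p))

/-- Fubini's theorem in the order of integration of the collision operator. -/
lemma collision_fubini {Ω : Type*} [MeasurableSpace Ω] (σ : Measure Ω) [SFinite σ] {X : Type*}
    [MeasurableSpace X] (ν : Measure X) [SFinite ν] {G : Ω × X × X → ℝ}
    (hG : Integrable G (σ.prod (ν.prod ν))) :
    Integrable (fun p => ∫ q, ∫ ω, G (ω, (p, q)) ∂σ ∂ν) ν ∧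
    ∫ p, ∫ q, ∫ ω, G (ω, (p, q)) ∂σ ∂ν ∂ν = ∫ z, G z ∂(σ.prod (ν.prod ν)) ∧
    ∫ p, ‖∫ q, ∫ ω, G (ω, (p, q)) ∂σ ∂ν‖ ∂ν ≤ ∫ z, ‖G z‖ ∂(σ.prod (ν.prod ν)) := by
  have eval : ∀ H : Ω × X × X → ℝ, Integrable H (σ.prod (ν.prod ν)) →
      Integrable (fun z : X × X => ∫ ω, H (ω, z) ∂σ) (ν.prod ν) ∧
      Integrable (fun p => ∫ q, ∫ ω, H (ω, (p, q)) ∂σ ∂ν) ν ∧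
      ∫ p, ∫ q, ∫ ω, H (ω, (p, q)) ∂σ ∂ν ∂ν = ∫ z, H z ∂(σ.prod (ν.prod ν)) := by
    intro H hH
    have h1 : Integrable (fun z : X × X => ∫ ω, H (ω, z) ∂σ) (ν.prod ν) :=
      hH.integral_prod_right
    refine ⟨h1, h1.integral_prod_left, ?_⟩
    rw [integral_prod_symm _ hH, integral_prod _ h1]
  obtain ⟨h1, h2, h3⟩ := eval G hG
  obtain ⟨k1, k2, k3⟩ := eval _ hG.norm
  refine ⟨h2, h3, ?_⟩
  rw [← k3]
  refine integral_mono_ae h2.norm k2 ?_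
  filter_upwards [h1.prod_right_ae, k1.prod_right_ae] with p hp kp
  exact (norm_integral_le_integral_norm _).trans
    (integral_mono hp.norm kp fun q => norm_integral_le_integral_norm _)

/-- The integrand of the loss term `Q⁻(w,w)`, without the weight `1 / q⁰`. -/
def lossF (α β : ℝ) (S₀ : E3 → E3 → E3 → E3 → ℝ) (w : E3 → ℝ)
    (x : Metric.sphere (0 : E3) 1 × E3 × E3) : ℝ :=
  w x.2.1 * w x.2.2 *
    S₀ x.2.1 x.2.2 (pPr α β x.2.1 x.2.2 x.1) (qPr α β x.2.1 x.2.2 x.1)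

/-- The collision map at all directions `ω` simultaneously. -/
def sphMap (α β : ℝ) (x : Metric.sphere (0 : E3) 1 × E3 × E3) :
    Metric.sphere (0 : E3) 1 × E3 × E3 := (x.1, collMap α β x.1 x.2)

lemma measurePreserving_sphMap {α β : ℝ} (hα : 0 < α) (hβ : 0 < β) :
    MeasurePreserving (sphMap α β) (sphMeas.prod ((momMeas α β).prod (momMeas α β)))
      (sphMeas.prod ((momMeas α β).prod (momMeas α β))) := by
  refine (MeasurePreserving.id sphMeas).skew_product
    (g := fun ω : Metric.sphere (0 : E3) 1 => collMap α β ω) ?_ ?_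
  · exact (measurable_collMap α β).comp (f := fun x : Metric.sphere (0 : E3) 1 × E3 × E3 =>
      ((x.1 : E3), x.2)) (by fun_prop)
  · exact .of_forall fun ω => (measurePreserving_collMap (omHat_unit hα hβ ω)).map_eq

lemma Qminus_eq (α β : ℝ) (S₀ : E3 → E3 → E3 → E3 → ℝ) (w : E3 → ℝ) (p : E3) :
    Qminus α β S₀ w w p =
      α * β ^ 2 * ∫ q, ∫ ω, lossF α β S₀ w (ω, (p, q)) ∂sphMeas ∂momMeas α β := by
  rw [integral_momMeas]; rfl

/-- The gain integrand is the loss integrand composed with the collision map: this uses that the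
collision map is an involution and that `S₀` is symmetric. -/
lemma Qplus_eq {α β : ℝ} (hα : 0 < α) (hβ : 0 < β) {S₀ : E3 → E3 → E3 → E3 → ℝ}
    (hS₀symm : ∀ p q p' q', S₀ p q p' q' = S₀ p' q' p q) (w : E3 → ℝ) (p : E3) :
    Qplus α β S₀ w w p = α * β ^ 2 *
      ∫ q, ∫ ω, lossF α β S₀ w (sphMap α β (ω, (p, q))) ∂sphMeas ∂momMeas α β := by
  rw [integral_momMeas, Qplus]
  congr! 6 with q ω
  have h := collMap_collMap (omHat_unit hα hβ ω) (p, q)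
  simp only [collMap, Prod.mk.injEq] at h
  simp only [lossF, sphMap, collMap, h.1, h.2]
  rw [hS₀symm]

lemma integrable_lossF {C₁ α β : ℝ} {S₀ : E3 → E3 → E3 → E3 → ℝ}
    (hS₀meas : Measurable fun x : (E3 × E3) × E3 × E3 => S₀ x.1.1 x.1.2 x.2.1 x.2.2)
    (hS₀nonneg : ∀ p q p' q', 0 ≤ S₀ p q p' q')
    (hS₀bdd : ∀ p q p' q', S₀ p q p' q' ≤ C₁) {w : E3 → ℝ} (hw : Integrable w)
    (hwm : Measurable w) :
    Measurable (lossF α β S₀ w) ∧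
    Integrable (lossF α β S₀ w) (sphMeas.prod ((momMeas α β).prod (momMeas α β))) ∧
    ∫ z, ‖lossF α β S₀ w z‖ ∂(sphMeas.prod ((momMeas α β).prod (momMeas α β))) ≤
      4 * Real.pi * C₁ * (∫ p, ‖w p‖) ^ 2 := by
  have hC₁ : 0 ≤ C₁ := (hS₀nonneg 0 0 0 0).trans (hS₀bdd 0 0 0 0)
  have hS : Measurable fun x : Metric.sphere (0 : E3) 1 × E3 × E3 =>
      S₀ x.2.1 x.2.2 (pPr α β x.2.1 x.2.2 x.1) (qPr α β x.2.1 x.2.2 x.1) := by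
    have h := (measurable_collMap α β).comp
      (f := fun x : Metric.sphere (0 : E3) 1 × E3 × E3 => ((x.1 : E3), x.2)) (by fun_prop)
    exact hS₀meas.comp (measurable_snd.prodMk h)
  have hm : Measurable (lossF α β S₀ w) :=
    ((hwm.comp (measurable_fst.comp measurable_snd)).mul
      (hwm.comp (measurable_snd.comp measurable_snd))).mul hS
  have hwν := integrable_momMeas α β hw
  have hbd : Integrable (fun x : Metric.sphere (0 : E3) 1 × E3 × E3 =>
      C₁ * (‖w x.2.1‖ * ‖w x.2.2‖)) (sphMeas.prod ((momMeas α β).prod (momMeas α β))) :=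
    (integrable_const C₁).mul_prod (hwν.norm.mul_prod hwν.norm)
  have hle : ∀ x, ‖lossF α β S₀ w x‖ ≤ C₁ * (‖w x.2.1‖ * ‖w x.2.2‖) := by
    intro x
    rw [lossF, norm_mul, norm_mul, mul_comm, Real.norm_of_nonneg (hS₀nonneg _ _ _ _)]
    exact mul_le_mul_of_nonneg_right (hS₀bdd _ _ _ _) (by positivity)
  have hint : Integrable (lossF α β S₀ w)
      (sphMeas.prod ((momMeas α β).prod (momMeas α β))) :=
    hbd.mono' hm.aestronglyMeasurable (.of_forall hle)
  refine ⟨hm, hint, (integral_mono hint.norm hbd hle).trans ?_⟩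
  rw [integral_prod_mul (fun _ : Metric.sphere (0 : E3) 1 => C₁)
    (fun y : E3 × E3 => ‖w y.1‖ * ‖w y.2‖), integral_prod_mul (fun p => ‖w p‖) (fun p => ‖w p‖),
    integral_const, sphMeas_univ, smul_eq_mul, ← sq]
  have h0 : 0 ≤ ∫ p, ‖w p‖ ∂momMeas α β := integral_nonneg fun _ => norm_nonneg _
  have := integral_momMeas_le α β hw
  gcongr

/-- The collision operator on `L¹`: `Q(w,w) / p⁰` has vanishing integral, and norm at most
`2C‖w‖²`. -/
lemma Qcoll_bound {C₁ α β : ℝ} (hα : 0 < α) (hβ : 0 < β) {S₀ : E3 → E3 → E3 → E3 → ℝ}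
    (hS₀meas : Measurable fun x : (E3 × E3) × E3 × E3 => S₀ x.1.1 x.1.2 x.2.1 x.2.2)
    (hS₀nonneg : ∀ p q p' q', 0 ≤ S₀ p q p' q')
    (hS₀bdd : ∀ p q p' q', S₀ p q p' q' ≤ C₁)
    (hS₀symm : ∀ p q p' q', S₀ p q p' q' = S₀ p' q' p q) {w : E3 → ℝ} (hw : Integrable w)
    (hwm : Measurable w) :
    Integrable (fun p => (pZ α β p)⁻¹ * Qcoll α β S₀ w w p) ∧
    ∫ p, (pZ α β p)⁻¹ * Qcoll α β S₀ w w p = 0 ∧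
    ∫ p, ‖(pZ α β p)⁻¹ * Qcoll α β S₀ w w p‖ ≤
      2 * (4 * Real.pi * C₁ * α * β ^ 2) * (∫ p, ‖w p‖) ^ 2 := by
  obtain ⟨hm, hint, hbound⟩ :=
    integrable_lossF (α := α) (β := β) hS₀meas hS₀nonneg hS₀bdd hw hwm
  have hT := measurePreserving_sphMap hα hβ
  have hmap : ∀ f : Metric.sphere (0 : E3) 1 × E3 × E3 → ℝ, Measurable f →
      ∫ z, f (sphMap α β z) ∂(sphMeas.prod ((momMeas α β).prod (momMeas α β))) =
        ∫ z, f z ∂(sphMeas.prod ((momMeas α β).prod (momMeas α β))) := by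
    intro f hf
    conv_rhs => rw [← hT.map_eq]
    exact (integral_map hT.measurable.aemeasurable hf.aestronglyMeasurable).symm
  obtain ⟨a1, a2, a3⟩ := collision_fubini sphMeas (momMeas α β) hint
  obtain ⟨b1, b2, b3⟩ := collision_fubini sphMeas (momMeas α β)
    (G := fun z => lossF α β S₀ w (sphMap α β z))
    ((hT.integrable_comp hm.aestronglyMeasurable).2 hint)
  rw [hmap _ hm] at b2
  rw [hmap (fun z => ‖lossF α β S₀ w z‖) hm.norm] at b3
  have hab : 0 < α * β ^ 2 := by positivity
  have hQ : Qcoll α β S₀ w w = fun p => α * β ^ 2 *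
      (∫ q, ∫ ω, lossF α β S₀ w (sphMap α β (ω, (p, q))) ∂sphMeas ∂momMeas α β) -
      α * β ^ 2 * ∫ q, ∫ ω, lossF α β S₀ w (ω, (p, q)) ∂sphMeas ∂momMeas α β :=
    funext fun p => by rw [Qcoll, Qplus_eq hα hβ hS₀symm, Qminus_eq]
  have hQint : Integrable (Qcoll α β S₀ w w) (momMeas α β) := by
    rw [hQ]; exact (b1.const_mul _).sub (a1.const_mul _)
  refine ⟨(integrable_momMeas_iff α β _).1 hQint, ?_, ?_⟩
  · rw [← integral_momMeas, hQ, integral_sub (b1.const_mul _) (a1.const_mul _),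
      integral_const_mul, integral_const_mul, a2, b2, sub_self]
  · have e : ∀ p, ‖(pZ α β p)⁻¹ * Qcoll α β S₀ w w p‖ =
        (pZ α β p)⁻¹ * ‖Qcoll α β S₀ w w p‖ := fun p => by
      rw [norm_mul, Real.norm_of_nonneg (inv_nonneg.2 (pZ_pos α β p).le)]
    simp_rw [e]
    rw [← integral_momMeas]
    have step : ∫ p, ‖Qcoll α β S₀ w w p‖ ∂momMeas α β ≤
        α * β ^ 2 * (∫ p, ‖∫ q, ∫ ω, lossF α β S₀ w (sphMap α β (ω, (p, q))) ∂sphMeas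
          ∂momMeas α β‖ ∂momMeas α β) +
        α * β ^ 2 * ∫ p, ‖∫ q, ∫ ω, lossF α β S₀ w (ω, (p, q)) ∂sphMeas
          ∂momMeas α β‖ ∂momMeas α β := by
      rw [← integral_const_mul, ← integral_const_mul,
        ← integral_add (b1.norm.const_mul _) (a1.norm.const_mul _)]
      refine integral_mono hQint.norm ((b1.norm.const_mul _).add (a1.norm.const_mul _))
        fun p => ?_
      rw [hQ]
      refine (norm_sub_le _ _).trans_eq ?_
      rw [norm_mul (α * β ^ 2), norm_mul (α * β ^ 2), Real.norm_of_nonneg hab.le]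
    have h1 := mul_le_mul_of_nonneg_left (b3.trans hbound) hab.le
    have h2 := mul_le_mul_of_nonneg_left (a3.trans hbound) hab.le
    linarith

end

theorem statement_8
    (C₀ C₁ α β : ℝ) (hC₀ : 0 < C₀) (hC₁ : 0 < C₁) (hα : C₀ ≤ α) (hβ : C₀ ≤ β)
    (S₀ : E3 → E3 → E3 → E3 → ℝ)
    (hS₀meas : Measurable fun x : (E3 × E3) × E3 × E3 => S₀ x.1.1 x.1.2 x.2.1 x.2.2)
    (hS₀nonneg : ∀ p q p' q', 0 ≤ S₀ p q p' q')
    (hS₀bdd : ∀ p q p' q', S₀ p q p' q' ≤ C₁)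
    (hS₀symm : ∀ p q p' q', S₀ p q p' q' = S₀ p' q' p q)
    (r : ℝ) (hr : 0 < r) (n : ℕ) (hn : 1 ≤ n) (u w : L1)
    (hu : memX r u) (hw : memX r w)
    (heq : (fun p : E3 => Real.sqrt n * w p - (pZ α β p)⁻¹ * Qcoll α β S₀ (⇑w) (⇑w) p)
      =ᵐ[volume] ⇑u) :
    ‖Real.sqrt n • w - u‖ ≤ 2 * (4 * Real.pi * C₁ * α * β ^ 2) * ‖u‖ ^ 2 / n ∧
    2 * (4 * Real.pi * C₁ * α * β ^ 2) * ‖u‖ ^ 2 / n ≤ 2 * (4 * Real.pi * C₁ * α * β ^ 2) * r ^ 2 / n := by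
  have hα0 : 0 < α := hC₀.trans_le hα
  have hβ0 : 0 < β := hC₀.trans_le hβ
  have hn0 : (0 : ℝ) < n := by exact_mod_cast hn
  have hwi : Integrable (w : E3 → ℝ) := L1.integrable_coeFn w
  have hui : Integrable (u : E3 → ℝ) := L1.integrable_coeFn u
  obtain ⟨hQi, hQ0, hQn⟩ := Qcoll_bound hα0 hβ0 hS₀meas hS₀nonneg hS₀bdd hS₀symm hwi
    (Lp.stronglyMeasurable w).measurable
  have hnw : ‖w‖ = ∫ p, w p := by
    rw [L1.norm_eq_integral_norm]
    refine integral_congr_ae ?_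
    filter_upwards [hw.1] with p hp using Real.norm_of_nonneg hp
  have hnu : ‖u‖ = ∫ p, u p := by
    rw [L1.norm_eq_integral_norm]
    refine integral_congr_ae ?_
    filter_upwards [hu.1] with p hp using Real.norm_of_nonneg hp
  -- integrating the equation, the collision term drops out
  have hmass : ‖u‖ = Real.sqrt n * ‖w‖ := by
    rw [hnu, ← integral_congr_ae heq, integral_sub (hwi.const_mul _) hQi, hQ0,
      integral_const_mul, hnw, sub_zero]
  have hsq : ‖w‖ ^ 2 = ‖u‖ ^ 2 / n := by
    rw [hmass, mul_pow, Real.sq_sqrt hn0.le]; field_simp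
  have hdiff : ‖Real.sqrt n • w - u‖ = ∫ p, ‖(pZ α β p)⁻¹ * Qcoll α β S₀ (⇑w) (⇑w) p‖ := by
    rw [L1.norm_eq_integral_norm]
    refine integral_congr_ae ?_
    filter_upwards [heq, Lp.coeFn_sub (Real.sqrt n • w) u, Lp.coeFn_smul (Real.sqrt n) w]
      with p h1 h2 h3
    rw [h2, Pi.sub_apply, h3, Pi.smul_apply, smul_eq_mul, ← h1, sub_sub_cancel]
  refine ⟨?_, ?_⟩
  · rw [hdiff, mul_div_assoc, ← hsq, L1.norm_eq_integral_norm w]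
    exact hQn
  · have := hu.2
    gcongr
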